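/- If R is a von Neumann regular ring and the free right R-module R^(ℕ) is a C2 module, then R satisfies the descending chain condition on principal left ideals, hence R is right perfect, and therefore R is semisimple. -/

import Mathlib

def IsSummand {R M : Type*} [Ring R] [AddCommGroup M] [Module R M]
    (p : Submodule R M) : Prop :=
  ∃ q : Submodule R M, IsCompl p q

/-- Partial products `aₙ ⋯ a₂a₁` of a sequence, giving the chain
`Ra₁ ⊇ Ra₂a₁ ⊇ ⋯` of principal left ideals. -/
def chainProd {R : Type*} [Ring R] (a : ℕ → R) : ℕ → R
  | 0 => a 0
  | n + 1 => a (n + 1) * chainProd a n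

/-!
Right multiplication by the entries of `a` defines the endomorphism `eₙ ↦ eₙ - eₙ₊₁ aₙ` of
`R^(ℕ)`. It is injective, so its range is isomorphic to `R^(ℕ)`; if this range is a summand, the
endomorphism has a left inverse `r`. Telescoping gives
`r e₀ = e₀ + e₁ a₀ + ⋯ + eₘ₊₁ aₘ⋯a₀ + r (eₘ₊₂ aₘ₊₁⋯a₀)`. Since `r e₀` has finite support, its
coordinate at `m + 1` vanishes for all large `m`, which puts `aₘ⋯a₀` in `R aₘ₊₁⋯a₀`.

In a ring with DCC on principal left ideals every nonzero left ideal contains a minimal one, hence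
a nonzero idempotent if the ring is semiprime (Brauer's lemma). If `Rc` is minimal among the
principal left ideals with `Rc + I = R`, then `Rc ∩ I = 0`: a nonzero idempotent `e` in the
intersection would allow `c` to be replaced by `c (1 - e)`.
-/

section BassMap

variable {R : Type*} [Ring R] (a : ℕ → R)

/-- The endomorphism `eₙ ↦ eₙ - eₙ₊₁ aₙ` of the free right module `R^(ℕ)`, whose cokernel is Bass's
flat module `colim (R → R → ⋯)` along left multiplication by the `aₙ`. -/
noncomputable def bassMap : (ℕ →₀ R) →ₗ[Rᵐᵒᵖ] (ℕ →₀ R) :=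
  Finsupp.lsum ℕ fun n =>
    Finsupp.lsingle n - Finsupp.lsingle (n + 1) ∘ₗ DistribSMul.toLinearMap Rᵐᵒᵖ R (a n)

theorem bassMap_single (n : ℕ) (x : R) :
    bassMap a (Finsupp.single n x) = Finsupp.single n x - Finsupp.single (n + 1) (a n * x) := by
  simp [bassMap]

theorem bassMap_apply_zero (x : ℕ →₀ R) : bassMap a x 0 = x 0 := by
  induction x using Finsupp.induction_linear with
  | zero => simp
  | add x y hx hy => simp [hx, hy]
  | single n r => simp [bassMap_single]

theorem bassMap_apply_succ (x : ℕ →₀ R) (n : ℕ) :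
    bassMap a x (n + 1) = x (n + 1) - a n * x n := by
  induction x using Finsupp.induction_linear with
  | zero => simp
  | add x y hx hy => simp only [map_add, Finsupp.add_apply, hx, hy, mul_add]; abel
  | single m r =>
    obtain rfl | h := eq_or_ne m n
    · simp [bassMap_single]
    · simp [bassMap_single, h]

theorem bassMap_injective : Function.Injective (bassMap a) := by
  refine (injective_iff_map_eq_zero _).2 fun x hx => Finsupp.ext fun n => ?_
  induction n with
  | zero => rw [← bassMap_apply_zero a, hx]
  | succ n ih => simpa [hx, ih] using (bassMap_apply_succ a x n).symm

variable {a}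

theorem map_single_eq_of_comp_bassMap_eq_lapply {φ : (ℕ →₀ R) →ₗ[Rᵐᵒᵖ] R} {k : ℕ}
    (hφ : φ ∘ₗ bassMap a = Finsupp.lapply k) (n : ℕ) (x : R) :
    φ (Finsupp.single n x) = Finsupp.single n x k + φ (Finsupp.single (n + 1) (a n * x)) := by
  have h : φ (bassMap a (Finsupp.single n x)) = Finsupp.single n x k := LinearMap.congr_fun hφ _
  rwa [bassMap_single, map_sub, sub_eq_iff_eq_add] at h

theorem map_single_zero_one_eq_of_comp_bassMap_eq_lapply {φ : (ℕ →₀ R) →ₗ[Rᵐᵒᵖ] R} {k : ℕ}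
    (hφ : φ ∘ₗ bassMap a = Finsupp.lapply k) {n : ℕ} (hn : n < k) :
    φ (Finsupp.single 0 1) = φ (Finsupp.single (n + 1) (chainProd a n)) := by
  induction n with
  | zero => simp [map_single_eq_of_comp_bassMap_eq_lapply hφ 0, chainProd, hn.ne]
  | succ n ih =>
    rw [ih (by lia), map_single_eq_of_comp_bassMap_eq_lapply hφ]
    simp [chainProd, hn.ne]

theorem chainProd_mem_span_succ_of_comp_bassMap_eq_lapply {φ : (ℕ →₀ R) →ₗ[Rᵐᵒᵖ] R} {m : ℕ}
    (hφ : φ ∘ₗ bassMap a = Finsupp.lapply (m + 1)) (h0 : φ (Finsupp.single 0 1) = 0) :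
    chainProd a m ∈ Submodule.span R {chainProd a (m + 1)} := by
  have hsum : chainProd a m + φ (Finsupp.single (m + 2) (chainProd a (m + 1))) = 0 := by
    rw [← h0, map_single_zero_one_eq_of_comp_bassMap_eq_lapply hφ m.lt_succ_self,
      map_single_eq_of_comp_bassMap_eq_lapply hφ (m + 1), Finsupp.single_eq_same, chainProd]
  have hlin (x : R) : φ (Finsupp.single (m + 2) x) = φ (Finsupp.single (m + 2) 1) * x := by
    simpa using φ.map_smul (MulOpposite.op x) (Finsupp.single (m + 2) 1)
  rw [eq_neg_of_add_eq_zero_left hsum, hlin, ← neg_mul]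
  exact Submodule.smul_mem _ _ (Submodule.mem_span_singleton_self _)

variable (a) in
theorem span_chainProd_succ_le (n : ℕ) :
    Submodule.span R {chainProd a (n + 1)} ≤ Submodule.span R {chainProd a n} :=
  (Submodule.span_singleton_le_iff_mem _ _).2 <|
    Submodule.smul_mem _ (a (n + 1)) (Submodule.mem_span_singleton_self _)

theorem exists_span_chainProd_eq_of_isSummand_range_bassMap
    (h : IsSummand (LinearMap.range (bassMap a))) :
    ∃ n : ℕ, ∀ m : ℕ, n ≤ m →
      Submodule.span R {chainProd a m} = Submodule.span R {chainProd a n} := by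
  obtain ⟨q, hq⟩ := h
  let r := (bassMap a).linearProjOfIsCompl q (bassMap_injective a) hq
  have hr (k : ℕ) : (Finsupp.lapply k ∘ₗ r) ∘ₗ bassMap a = Finsupp.lapply k :=
    LinearMap.ext fun x => by simp [r]
  obtain ⟨n, hn⟩ := (r (Finsupp.single 0 1)).support.bddAbove
  have hzero {m : ℕ} (hm : n ≤ m) : r (Finsupp.single 0 1) (m + 1) = 0 :=
    Finsupp.notMem_support_iff.1 fun hmem => (hn hmem).not_gt (Nat.lt_succ_of_le hm)
  refine ⟨n, fun m hm => ?_⟩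
  induction m, hm using Nat.le_induction with
  | base => rfl
  | succ m hm ih =>
    rw [← ih]
    exact (span_chainProd_succ_le a m).antisymm <| (Submodule.span_singleton_le_iff_mem _ _).2 <|
      chainProd_mem_span_succ_of_comp_bassMap_eq_lapply (hr (m + 1)) (hzero hm)

end BassMap

section PrincipalLeftIdeals

variable {R : Type*} [Ring R]

theorem exists_chainProd_eq {f : ℕ → R} (hf : ∀ n, f (n + 1) ∈ Submodule.span R {f n}) :
    ∃ a : ℕ → R, chainProd a = f := by
  choose c hc using fun n => Submodule.mem_span_singleton.1 (hf n)
  refine ⟨fun n => n.casesOn (f 0) c, funext fun n => ?_⟩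
  induction n with
  | zero => rfl
  | succ n ih => rw [chainProd, ih, ← hc n, smul_eq_mul]

theorem wellFounded_span_singleton_lt
    (hdcc : ∀ a : ℕ → R, ∃ n : ℕ, ∀ m : ℕ, n ≤ m →
      Submodule.span R {chainProd a m} = Submodule.span R {chainProd a n}) :
    WellFounded fun x y : R => Submodule.span R {x} < Submodule.span R {y} := by
  refine wellFounded_iff_isEmpty_descending_chain.2 ⟨fun ⟨f, hf⟩ => ?_⟩
  obtain ⟨a, rfl⟩ := exists_chainProd_eq fun n =>
    (Submodule.span_singleton_le_iff_mem _ _).1 (hf n).le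
  obtain ⟨n, hn⟩ := hdcc a
  exact (hf n).ne (hn (n + 1) n.le_succ)

theorem isAtomic_ideal_of_wellFounded_span_singleton_lt
    (hwf : WellFounded fun x y : R => Submodule.span R {x} < Submodule.span R {y}) :
    IsAtomic (Ideal R) := by
  refine ⟨fun I => or_iff_not_imp_left.2 fun hI => ?_⟩
  obtain ⟨y, hyI, hy⟩ := Submodule.exists_mem_ne_zero_of_ne_bot hI
  obtain ⟨x, ⟨hxI, hx⟩, hmin⟩ := hwf.has_min {x | x ∈ I ∧ x ≠ 0} ⟨y, hyI, hy⟩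
  refine ⟨Submodule.span R {x}, ⟨mt Submodule.span_singleton_eq_bot.1 hx, fun J hJ => ?_⟩,
    (Submodule.span_singleton_le_iff_mem _ _).2 hxI⟩
  by_contra hJ0
  obtain ⟨z, hzJ, hz⟩ := Submodule.exists_mem_ne_zero_of_ne_bot hJ0
  have hzx : Submodule.span R {z} < Submodule.span R {x} :=
    ((Submodule.span_singleton_le_iff_mem _ _).2 hzJ).trans_lt hJ
  have hzI : z ∈ I := (Submodule.span_singleton_le_iff_mem _ _).2 hxI (hJ.le hzJ)
  exact hmin z ⟨hzI, hz⟩ hzx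

-- Brauer's lemma: `z ↦ z * u` is an automorphism of `L`, and the `e` with `e * u = u` works.
theorem exists_isIdempotentElem_mem_of_isAtom {L : Ideal R} (hL : IsAtom L) {x u : R} (hx : x ∈ L)
    (hu : u ∈ L) (hxu : x * u ≠ 0) : ∃ e ∈ L, e ≠ 0 ∧ IsIdempotentElem e := by
  have hspan {z : R} (hz : z ∈ L) (hz0 : z ≠ 0) : Submodule.span R {z} = L :=
    (hL.le_iff_eq (mt Submodule.span_singleton_eq_bot.1 hz0)).1
      ((Submodule.span_singleton_le_iff_mem _ _).2 hz)
  have hinj {z : R} (hz : z ∈ L) (hzu : z * u = 0) : z = 0 := by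
    by_contra hz0
    obtain ⟨s, rfl⟩ := Submodule.mem_span_singleton.1 ((hspan hz hz0).ge hx)
    exact hxu (by rw [smul_eq_mul, mul_assoc, hzu, mul_zero])
  obtain ⟨s, hs⟩ := Submodule.mem_span_singleton.1 ((hspan (L.mul_mem_left x hu) hxu).ge hu)
  have heL : s * x ∈ L := L.mul_mem_left s hx
  have heu : s * x * u = u := by rw [mul_assoc, ← smul_eq_mul, hs]
  refine ⟨s * x, heL, fun he => hxu ?_, sub_eq_zero.1 <| hinj ?_ ?_⟩
  · rw [← heu, he, zero_mul, mul_zero]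
  · exact L.sub_mem (L.mul_mem_left _ heL) heL
  · rw [sub_mul, mul_assoc, heu, heu, sub_self]

/-- A ring is semiprime if it has no nonzero element `x` with `x R x = 0`; equivalently, no nonzero
left ideal has square zero. -/
def IsSemiprimeRing (R : Type*) [Ring R] : Prop :=
  ∀ x : R, (∀ r : R, x * r * x = 0) → x = 0

theorem isSemiprimeRing_of_regular (hreg : ∀ a : R, ∃ b : R, a = a * b * a) :
    IsSemiprimeRing R := fun x hx =>
  let ⟨b, hb⟩ := hreg x
  hb.trans (hx b)

theorem IsSemiprimeRing.exists_isIdempotentElem_mem [IsAtomic (Ideal R)] (hR : IsSemiprimeRing R)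
    {I : Ideal R} (hI : I ≠ ⊥) : ∃ e ∈ I, e ≠ 0 ∧ IsIdempotentElem e := by
  obtain ⟨L, hL, hLI⟩ := (eq_bot_or_exists_atom_le I).resolve_left hI
  obtain ⟨x, hxL, hx⟩ := Submodule.exists_mem_ne_zero_of_ne_bot hL.1
  obtain ⟨r, hr⟩ := not_forall.1 (mt (hR x) hx)
  rw [mul_assoc] at hr
  obtain ⟨e, heL, he⟩ := exists_isIdempotentElem_mem_of_isAtom hL hxL (L.mul_mem_left r hxL) hr
  exact ⟨e, hLI heL, he⟩

theorem isSemisimpleRing_of_exists_isIdempotentElem_mem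
    (hwf : WellFounded fun x y : R => Submodule.span R {x} < Submodule.span R {y})
    (hidem : ∀ I : Ideal R, I ≠ ⊥ → ∃ e ∈ I, e ≠ 0 ∧ IsIdempotentElem e) :
    IsSemisimpleRing R := by
  refine (isSemisimpleModule_iff R R).2 ⟨fun I => ?_⟩
  obtain ⟨c, hc : I ⊔ Submodule.span R {c} = ⊤, hmin⟩ :=
    hwf.has_min {c | I ⊔ Submodule.span R {c} = ⊤}
      ⟨1, (congrArg (I ⊔ ·) Ideal.span_singleton_one).trans (sup_top_eq I)⟩
  refine ⟨Submodule.span R {c}, disjoint_iff.2 ?_, codisjoint_iff.2 hc⟩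
  by_contra hne
  obtain ⟨e, ⟨heI, hec⟩, he0, he⟩ := hidem _ hne
  have hmem : c * (1 - e) ∈ Submodule.span R {c} := by
    rw [mul_sub, mul_one]
    exact Submodule.sub_mem _ (Submodule.mem_span_singleton_self c) (Submodule.smul_mem _ c hec)
  have hsup : I ⊔ Submodule.span R {c * (1 - e)} = ⊤ := by
    refine top_unique (hc.ge.trans (sup_le le_sup_left ?_))
    rw [Submodule.span_singleton_le_iff_mem, Submodule.mem_sup]
    exact ⟨c * e, I.smul_mem c heI, c * (1 - e), Submodule.mem_span_singleton_self _,
      by rw [← mul_add, add_sub_cancel, mul_one]⟩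
  have he_notMem : e ∉ Submodule.span R {c * (1 - e)} := fun h => by
    obtain ⟨s, hs⟩ := Submodule.mem_span_singleton.1 h
    refine he0 ?_
    calc e = e * e := he.eq.symm
      _ = s * (c * (1 - e)) * e := by rw [← smul_eq_mul s, hs]
      _ = 0 := by simp only [mul_assoc, he.one_sub_mul_self, mul_zero]
  exact hmin _ hsup <| ((Submodule.span_singleton_le_iff_mem _ _).2 hmem).lt_of_not_ge
    fun hle => he_notMem (hle hec)

end PrincipalLeftIdeals

theorem stmt18_general {R : Type*} [Ring R]
    (hGC2 : ∀ K : Submodule Rᵐᵒᵖ (ℕ →₀ R), Nonempty (K ≃ₗ[Rᵐᵒᵖ] (ℕ →₀ R)) → IsSummand K) :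
    (∀ a : ℕ → R, ∃ n : ℕ, ∀ m : ℕ, n ≤ m →
      Submodule.span R {chainProd a m} = Submodule.span R {chainProd a n}) ∧
    (IsSemiprimeRing R → IsSemisimpleRing R) := by
  have hdcc (a : ℕ → R) := exists_span_chainProd_eq_of_isSummand_range_bassMap <|
    hGC2 _ ⟨(LinearEquiv.ofInjective _ (bassMap_injective a)).symm⟩
  refine ⟨hdcc, fun hR => ?_⟩
  have hwf := wellFounded_span_singleton_lt hdcc
  have := isAtomic_ideal_of_wellFounded_span_singleton_lt hwf
  exact isSemisimpleRing_of_exists_isIdempotentElem_mem hwf fun _ => hR.exists_isIdempotentElem_mem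

/-- If `R` is von Neumann regular and the free right `R`-module `R^(ℕ)` is C2,
then `R` has DCC on principal left ideals (so `R` is right perfect), and hence
`R` is semisimple. -/
theorem stmt18 {R : Type*} [Ring R]
    (hreg : ∀ a : R, ∃ b : R, a = a * b * a)
    (hC2 : ∀ K L : Submodule Rᵐᵒᵖ (ℕ →₀ R), IsSummand L →
      Nonempty (K ≃ₗ[Rᵐᵒᵖ] L) → IsSummand K) :
    (∀ a : ℕ → R, ∃ n : ℕ, ∀ m : ℕ, n ≤ m →
      Submodule.span R {chainProd a m} = Submodule.span R {chainProd a n}) ∧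
    IsSemisimpleRing R := by
  have h := stmt18_general fun K ⟨e⟩ =>
    hC2 K ⊤ ⟨⊥, isCompl_top_bot⟩ ⟨e.trans Submodule.topEquiv.symm⟩
  exact ⟨h.1, h.2 (isSemiprimeRing_of_regular hreg)⟩
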